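/- Let 1 < p < 2 and n ≥ 1. Let γ(t) = exp(p t^{p−1}) ∫_t^∞ exp(−p s^{p−1}) ds for t ≥ 0, and let H : [γ(0), ∞) → [0,∞) be the inverse of the strictly increasing function t ↦ t + γ(t). Define U : ℝⁿ×ℝⁿ → ℝ by U(x,y) = (|y|² − |x|²)/(2γ(0)) + γ(0)/2 if |x|+|y| ≤ γ(0), and U(x,y) = |y| − H(|x|+|y|)^p − p·H(|x|+|y|)^{p−1}·(|x| − H(|x|+|y|)) if |x|+|y| > γ(0). Then for all x, y ∈ ℝⁿ one has U(x,y) ≥ max{|y|, γ(0)/2} − |x|^p. -/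

import Mathlib

/-!
Write `a = |x|`, `b = |y|`, `g = γ(0)`. The majorization by `|y| − |x|^p` is elementary: a completed
square in the region `a + b ≤ g`, and the tangent-line inequality for `s ↦ s^p` at `t = H(a + b)`
in the region `a + b > g`.

For the majorization by `γ(0)/2 − |x|^p`, the point is that `U` is nondecreasing in `b`. In the
outer region this is seen by taking `t` rather than `b` as the parameter (`outer_mono`), using
`γ' = p(p−1)t^{p−2}γ − 1`; no regularity of `H` is needed. If `a ≤ g`, this reduces the claim to
the boundary `a + b = g`, where it follows from `γ(0)^{p−1} ≥ 1/2` (`sq_div_le`). If `a > g`, it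
reduces to `b = 0`, which is `axis_bound`, again by monotonicity in `t = H(a)`: the sign of the
derivative is that of `p(t + γ(t))^{p−1} − p t^{p−1} − 1`.

Both endpoint facts thus rest on `(t + γ(t))^{p−1} ≥ t^{p−1} + 1/p`, a Jensen inequality for the
exponential distribution, proved in `shift_le`.
-/

open Real MeasureTheory Set

/-- The function `γ(t) = exp(p t^{p−1}) ∫_t^∞ exp(−p s^{p−1}) ds`. -/
noncomputable def gam (p : ℝ) (t : ℝ) : ℝ :=
  Real.exp (p * t ^ (p - 1)) * ∫ s in Ioi t, Real.exp (-p * s ^ (p - 1))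

/-- The weak-type special function for `1 < p < 2`, where `H` is the inverse of
`t ↦ t + γ(t)`. -/
noncomputable def Uweak (p : ℝ) (H : ℝ → ℝ) {n : ℕ}
    (x y : EuclideanSpace ℝ (Fin n)) : ℝ :=
  if ‖x‖ + ‖y‖ ≤ gam p 0 then
    (‖y‖ ^ 2 - ‖x‖ ^ 2) / (2 * gam p 0) + gam p 0 / 2
  else
    ‖y‖ - H (‖x‖ + ‖y‖) ^ p - p * H (‖x‖ + ‖y‖) ^ (p - 1) * (‖x‖ - H (‖x‖ + ‖y‖))

/-! ### Tangent lines of powers -/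

/-- `s ↦ s ^ r` lies below its tangent at `c` when `0 ≤ r ≤ 1`. -/
lemma rpow_le_tangent {r t c : ℝ} (hr0 : 0 ≤ r) (hr1 : r ≤ 1) (ht : 0 ≤ t) (hc : 0 < c) :
    t ^ r ≤ c ^ r + r * c ^ (r - 1) * (t - c) := by
  have h := rpow_one_add_le_one_add_mul_self (s := t / c - 1)
    (by have := div_nonneg ht hc.le; linarith) hr0 hr1
  rw [add_sub_cancel, Real.div_rpow ht hc.le, div_le_iff₀ (Real.rpow_pos_of_pos hc r)] at h
  rw [Real.rpow_sub_one hc.ne']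
  calc t ^ r ≤ _ := h
    _ = _ := by field_simp

/-- `s ↦ s ^ p` lies above its tangent at `t` when `p > 1`. -/
lemma tangent_le_rpow {p t a : ℝ} (hp : 1 < p) (ht : 0 ≤ t) (ha : 0 ≤ a) :
    t ^ p + p * t ^ (p - 1) * (a - t) ≤ a ^ p := by
  rcases ht.eq_or_lt with rfl | ht
  · rw [Real.zero_rpow (by linarith), Real.zero_rpow (by linarith)]
    simpa using Real.rpow_nonneg ha p
  have h := one_add_mul_self_le_rpow_one_add (s := a / t - 1)
    (by have := div_nonneg ha ht.le; linarith) hp.le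
  rw [add_sub_cancel, Real.div_rpow ha ht.le, le_div_iff₀ (Real.rpow_pos_of_pos ht p)] at h
  rw [Real.rpow_sub_one ht.ne']
  calc _ = (1 + p * (a / t - 1)) * t ^ p := by field_simp
    _ ≤ _ := h

/-! ### Regularity of `γ` -/

/-- The tail integral `∫_t^∞ exp(−p s^{p−1}) ds`, i.e. `γ(t)` without its exponential prefactor. -/
noncomputable def tail (p t : ℝ) : ℝ := ∫ s in Ioi t, Real.exp (-p * s ^ (p - 1))

lemma gam_eq (p t : ℝ) : gam p t = Real.exp (p * t ^ (p - 1)) * tail p t := rfl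

lemma gam_zero {p : ℝ} (hp : 1 < p) : gam p 0 = tail p 0 := by
  rw [gam_eq, Real.zero_rpow (by linarith)]; simp

lemma continuous_weight {p : ℝ} (hp : 1 < p) :
    Continuous fun s : ℝ => Real.exp (-p * s ^ (p - 1)) :=
  Real.continuous_exp.comp (continuous_const.mul (Real.continuous_rpow_const (by linarith)))

lemma integrableOn_weight {p : ℝ} (hp : 1 < p) :
    IntegrableOn (fun s : ℝ => Real.exp (-p * s ^ (p - 1))) (Ioi 0) := by
  simpa using integrableOn_rpow_mul_exp_neg_mul_rpow (p := p - 1) (s := 0) (b := p)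
    (by norm_num) (by linarith) (by linarith)

lemma tail_eq {p t : ℝ} (hp : 1 < p) (ht : 0 ≤ t) :
    tail p t = tail p 0 - ∫ s in (0 : ℝ)..t, Real.exp (-p * s ^ (p - 1)) := by
  rw [← intervalIntegral.integral_Ioi_sub_Ioi (integrableOn_weight hp) ht]
  simp [tail]

lemma hasDerivAt_tail {p t : ℝ} (hp : 1 < p) (ht : 0 < t) :
    HasDerivAt (tail p) (-Real.exp (-p * t ^ (p - 1))) t := by
  have h := (intervalIntegral.integral_hasDerivAt_right
    ((continuous_weight hp).intervalIntegrable 0 t)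
    ((continuous_weight hp).stronglyMeasurableAtFilter _ _)
    (continuous_weight hp).continuousAt).const_sub (tail p 0)
  refine h.congr_of_eventuallyEq ?_
  filter_upwards [Ioi_mem_nhds ht] with u hu
  exact tail_eq hp (le_of_lt hu)

lemma continuousOn_tail {p : ℝ} (hp : 1 < p) : ContinuousOn (tail p) (Ici 0) := by
  have h : Continuous fun t => tail p 0 - ∫ s in (0 : ℝ)..t, Real.exp (-p * s ^ (p - 1)) :=
    continuous_const.sub
      (intervalIntegral.continuous_primitive
        (fun a b => (continuous_weight hp).intervalIntegrable a b) 0)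
  exact h.continuousOn.congr fun t ht => tail_eq hp ht

lemma tendsto_tail {p : ℝ} (hp : 1 < p) : Filter.Tendsto (tail p) Filter.atTop (nhds 0) := by
  have h := (MeasureTheory.intervalIntegral_tendsto_integral_Ioi 0 (integrableOn_weight hp)
    Filter.tendsto_id).const_sub (tail p 0)
  have h0 : tail p 0 - (∫ s in Ioi (0 : ℝ), Real.exp (-p * s ^ (p - 1))) = 0 := sub_self _
  rw [h0] at h
  refine h.congr' ?_
  filter_upwards [Filter.eventually_ge_atTop 0] with t ht
  exact (tail_eq hp ht).symm

/-- `γ' = p(p−1)t^{p−2}γ − 1`. -/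
lemma hasDerivAt_gam {p t : ℝ} (hp : 1 < p) (ht : 0 < t) :
    HasDerivAt (gam p) (p * (p - 1) * t ^ (p - 2) * gam p t - 1) t := by
  have h1 : HasDerivAt (fun t : ℝ => p * t ^ (p - 1)) (p * ((p - 1) * t ^ (p - 1 - 1))) t :=
    (Real.hasDerivAt_rpow_const (Or.inl ht.ne')).const_mul p
  have h := h1.exp.mul (hasDerivAt_tail hp ht)
  refine h.congr_deriv ?_
  have e : Real.exp (p * t ^ (p - 1)) * Real.exp (-p * t ^ (p - 1)) = 1 := by
    rw [← Real.exp_add]; simp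
  rw [show p - 1 - 1 = p - 2 by ring, gam_eq]
  linear_combination -e

lemma continuousOn_gam {p : ℝ} (hp : 1 < p) : ContinuousOn (gam p) (Ici 0) := by
  have h : Continuous fun t : ℝ => Real.exp (p * t ^ (p - 1)) :=
    Real.continuous_exp.comp (continuous_const.mul (Real.continuous_rpow_const (by linarith)))
  exact h.continuousOn.mul (continuousOn_tail hp)

/-! ### The lower bound `(t + γ(t))^{p−1} ≥ t^{p−1} + 1/p` -/

/-- The point `c(t)` at which `p s^{p−1}` exceeds `p t^{p−1}` by exactly `1`. -/
noncomputable def shift (p t : ℝ) : ℝ := (t ^ (p - 1) + 1 / p) ^ (1 / (p - 1))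

lemma shift_base_pos {p t : ℝ} (hp : 1 < p) (ht : 0 ≤ t) : 0 < t ^ (p - 1) + 1 / p := by
  have := Real.rpow_nonneg ht (p - 1)
  have : 0 < 1 / p := by positivity
  linarith

lemma shift_pos {p t : ℝ} (hp : 1 < p) (ht : 0 ≤ t) : 0 < shift p t :=
  Real.rpow_pos_of_pos (shift_base_pos hp ht) _

lemma shift_rpow {p t : ℝ} (hp : 1 < p) (ht : 0 ≤ t) :
    shift p t ^ (p - 1) = t ^ (p - 1) + 1 / p := by
  rw [shift, ← Real.rpow_mul (shift_base_pos hp ht).le, one_div_mul_cancel (by linarith),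
    Real.rpow_one]

lemma lt_shift {p t : ℝ} (hp : 1 < p) (ht : 0 ≤ t) : t < shift p t := by
  have h : t ^ (p - 1) < shift p t ^ (p - 1) := by
    rw [shift_rpow hp ht]
    have : 0 < 1 / p := by positivity
    linarith
  exact (Real.rpow_lt_rpow_iff ht (shift_pos hp ht).le (by linarith)).1 h

lemma hasDerivAt_shift {p t : ℝ} (hp : 1 < p) (ht : 0 < t) :
    HasDerivAt (shift p) (shift p t ^ (2 - p) * t ^ (p - 2)) t := by
  have hb := shift_base_pos hp ht.le
  have h1 : HasDerivAt (fun t : ℝ => t ^ (p - 1) + 1 / p) ((p - 1) * t ^ (p - 1 - 1)) t :=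
    (Real.hasDerivAt_rpow_const (Or.inl ht.ne')).add_const _
  refine (h1.rpow_const (p := 1 / (p - 1)) (Or.inl hb.ne')).congr_deriv ?_
  have hp' : p - 1 ≠ 0 := by linarith
  rw [shift, ← Real.rpow_mul hb.le, show 1 / (p - 1) * (2 - p) = 1 / (p - 1) - 1 by
    field_simp; ring, show p - 1 - 1 = p - 2 by ring]
  field_simp

lemma continuous_shift {p : ℝ} (hp : 1 < p) : Continuous (shift p) := by
  have h : 0 ≤ 1 / (p - 1) := by
    have : 0 < p - 1 := by linarith
    positivity
  exact (Real.continuous_rpow_const h).comp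
    ((Real.continuous_rpow_const (by linarith)).add continuous_const)

/-- `c(t)` grows like a power of `u = t^{p−1} + 1/p`, while the weight decays like `exp(−p u)`. -/
lemma tendsto_shift_mul_weight {p : ℝ} (hp : 1 < p) :
    Filter.Tendsto (fun t => shift p t * Real.exp (-p * t ^ (p - 1))) Filter.atTop (nhds 0) := by
  have hu : Filter.Tendsto (fun t : ℝ => t ^ (p - 1) + 1 / p) Filter.atTop Filter.atTop :=
    Filter.tendsto_atTop_add_const_right _ _ (tendsto_rpow_atTop (by linarith))
  have h := ((tendsto_rpow_mul_exp_neg_mul_atTop_nhds_zero (1 / (p - 1)) p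
    (by linarith)).comp hu).mul_const (Real.exp 1)
  rw [zero_mul] at h
  refine h.congr fun t => ?_
  have hp0 : p ≠ 0 := by linarith
  simp only [Function.comp, shift]
  rw [mul_assoc, ← Real.exp_add]
  congr 2
  field_simp
  ring

/-- Jensen's inequality in disguise: substituting `u = p s^{p−1} − p t^{p−1}`, the number
`t + γ(t)` is the mean of `(t^{p−1} + X/p)^{1/(p−1)}` for a standard exponential variable `X`, and
`c(t)` is the value of this convex function at the mean of `X`.
Here it is obtained from the fact that `tail p t − (c(t) − t) exp(−p t^{p−1})` decreases to `0`. -/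
lemma shift_le {p t : ℝ} (hp : 1 < p) (hp2 : p < 2) (ht : 0 ≤ t) :
    shift p t ≤ t + gam p t := by
  set E : ℝ → ℝ := fun t => tail p t - (shift p t - t) * Real.exp (-p * t ^ (p - 1)) with hE
  have hcont : ContinuousOn E (Ici 0) :=
    (continuousOn_tail hp).sub
      (((continuous_shift hp).sub continuous_id).mul (continuous_weight hp)).continuousOn
  have hderiv : ∀ s, 0 < s → HasDerivAt E (-Real.exp (-p * s ^ (p - 1)) -
      ((shift p s ^ (2 - p) * s ^ (p - 2) - 1) * Real.exp (-p * s ^ (p - 1)) +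
       (shift p s - s) * (Real.exp (-p * s ^ (p - 1)) * (-p * ((p - 1) * s ^ (p - 2)))))) s := by
    intro s hs
    have h1 : HasDerivAt (fun t : ℝ => -p * t ^ (p - 1)) (-p * ((p - 1) * s ^ (p - 2))) s := by
      have := (Real.hasDerivAt_rpow_const (x := s) (p := p - 1) (Or.inl hs.ne')).const_mul (-p)
      rwa [show p - 1 - 1 = p - 2 by ring] at this
    exact (hasDerivAt_tail hp hs).sub
      (((hasDerivAt_shift hp hs).sub (hasDerivAt_id s)).mul h1.exp)
  have hanti : AntitoneOn E (Ici 0) := by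
    refine antitoneOn_of_deriv_nonpos (convex_Ici 0) hcont ?_ ?_
    · intro s hs
      rw [interior_Ici] at hs
      exact (hderiv s hs).differentiableAt.differentiableWithinAt
    · intro s hs
      rw [interior_Ici] at hs
      have hs : 0 < s := hs
      rw [(hderiv s hs).deriv]
      have hc := shift_pos hp hs.le
      have htan := rpow_le_tangent (r := p - 1) (by linarith) (by linarith) hs.le hc
      rw [shift_rpow hp hs.le, show p - 1 - 1 = p - 2 by ring] at htan
      have key : p * (p - 1) * (shift p s - s) ≤ shift p s ^ (2 - p) := by
        have e : shift p s ^ (2 - p) * shift p s ^ (p - 2) = 1 := by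
          rw [← Real.rpow_add hc]; simp
        have h3 : (p - 1) * shift p s ^ (p - 2) * (shift p s - s) ≤ 1 / p := by linarith
        rw [le_div_iff₀ (by linarith)] at h3
        have h4 := mul_le_mul_of_nonneg_left h3 (Real.rpow_pos_of_pos hc (2 - p)).le
        calc _ = shift p s ^ (2 - p) * shift p s ^ (p - 2) * (p * (p - 1) * (shift p s - s)) := by
              rw [e, one_mul]
          _ = _ := by ring
          _ ≤ _ := h4
          _ = _ := mul_one _
      have hpos := mul_pos (Real.exp_pos (-p * s ^ (p - 1))) (Real.rpow_pos_of_pos hs (p - 2))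
      nlinarith [mul_le_mul_of_nonneg_left key hpos.le]
  have hlim : Filter.Tendsto E Filter.atTop (nhds 0) := by
    have h2 : Filter.Tendsto (fun t => (shift p t - t) * Real.exp (-p * t ^ (p - 1)))
        Filter.atTop (nhds 0) := by
      refine squeeze_zero' ?_ ?_ (tendsto_shift_mul_weight hp)
      · filter_upwards [Filter.eventually_ge_atTop 0] with s hs
        exact mul_nonneg (sub_nonneg.2 (lt_shift hp hs).le) (Real.exp_pos _).le
      · filter_upwards [Filter.eventually_ge_atTop 0] with s hs
        exact mul_le_mul_of_nonneg_right (by linarith) (Real.exp_pos _).le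
    have h3 := (tendsto_tail hp).sub h2
    rwa [sub_zero] at h3
  have hnn : 0 ≤ E t := by
    refine le_of_tendsto hlim ?_
    filter_upwards [Filter.eventually_ge_atTop t] with s hs
    exact hanti ht (ht.trans hs) hs
  have e : Real.exp (p * t ^ (p - 1)) * Real.exp (-p * t ^ (p - 1)) = 1 := by
    rw [← Real.exp_add]; simp
  have := mul_nonneg (Real.exp_pos (p * t ^ (p - 1))).le hnn
  rw [gam_eq]
  simp only [hE] at this
  linear_combination this - (shift p t - t) * e

lemma gam_pos {p t : ℝ} (hp : 1 < p) (hp2 : p < 2) (ht : 0 ≤ t) : 0 < gam p t := by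
  linarith [shift_le hp hp2 ht, lt_shift hp ht]

lemma rpow_add_gam {p t : ℝ} (hp : 1 < p) (hp2 : p < 2) (ht : 0 ≤ t) :
    t ^ (p - 1) + 1 / p ≤ (t + gam p t) ^ (p - 1) := by
  rw [← shift_rpow hp ht]
  exact Real.rpow_le_rpow (shift_pos hp ht).le (shift_le hp hp2 ht) (by linarith)

/-! ### Monotonicity and boundary estimates -/

lemma strictMonoOn_add_gam {p : ℝ} (hp : 1 < p) (hp2 : p < 2) :
    StrictMonoOn (fun t => t + gam p t) (Ici 0) := by
  refine strictMonoOn_of_deriv_pos (convex_Ici 0) (continuousOn_id.add (continuousOn_gam hp)) ?_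
  intro s hs
  rw [interior_Ici] at hs
  have hs : 0 < s := hs
  have h : HasDerivAt (fun t => t + gam p t) _ s := (hasDerivAt_id' s).add (hasDerivAt_gam hp hs)
  rw [h.deriv]
  have h1 : 0 < p - 1 := by linarith
  have h2 := gam_pos hp hp2 hs.le
  have h3 := Real.rpow_pos_of_pos hs (p - 2)
  have : 0 < p * (p - 1) * s ^ (p - 2) * gam p s := by positivity
  linarith

/-- The case `t = 0` of `rpow_add_gam` gives `γ(0)^{p−1} ≥ 1/p ≥ 1/2`. -/
lemma half_le_gam_zero_rpow {p : ℝ} (hp : 1 < p) (hp2 : p < 2) :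
    1 / 2 ≤ gam p 0 ^ (p - 1) := by
  have h := rpow_add_gam hp hp2 le_rfl
  rw [Real.zero_rpow (by linarith), zero_add, zero_add] at h
  exact (one_div_le_one_div_of_le (by linarith) hp2.le).trans h

lemma sq_div_le {p a : ℝ} (hp : 1 < p) (hp2 : p < 2) (ha : 0 ≤ a) (hag : a ≤ gam p 0) :
    a ^ 2 / (2 * gam p 0) ≤ a ^ p := by
  have hg := gam_pos hp hp2 le_rfl
  have h := half_le_gam_zero_rpow hp hp2
  have h1 : a ^ (2 - p) ≤ 2 * gam p 0 := by
    calc a ^ (2 - p) ≤ gam p 0 ^ (2 - p) := Real.rpow_le_rpow ha hag (by linarith)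
      _ ≤ gam p 0 ^ (2 - p) * (2 * gam p 0 ^ (p - 1)) :=
          le_mul_of_one_le_right (Real.rpow_nonneg hg.le _) (by linarith)
      _ = 2 * (gam p 0 ^ (2 - p) * gam p 0 ^ (p - 1)) := by ring
      _ = 2 * gam p 0 := by
          rw [← Real.rpow_add hg, show 2 - p + (p - 1) = 1 by ring, Real.rpow_one]
  have h2 : a ^ 2 = a ^ p * a ^ (2 - p) := by
    rw [← Real.rpow_add' ha (by norm_num), ← Real.rpow_natCast]
    norm_num
  rw [div_le_iff₀ (by positivity), h2]
  exact mul_le_mul_of_nonneg_left h1 (Real.rpow_nonneg ha _)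

/-- The value of `U(x, 0) + |x|^p` at `|x| = t + γ(t)` is nondecreasing in `t`, hence at least its
value at `t = 0`, which is `γ(0)^p ≥ γ(0)/2`. -/
lemma axis_bound {p t : ℝ} (hp : 1 < p) (hp2 : p < 2) (ht : 0 ≤ t) :
    gam p 0 / 2 ≤ (t + gam p t) ^ p - t ^ p - p * t ^ (p - 1) * gam p t := by
  set F : ℝ → ℝ := fun t => (t + gam p t) ^ p - t ^ p - p * t ^ (p - 1) * gam p t with hF
  have hderiv : ∀ s, 0 < s → HasDerivAt F (p * (p - 1) * s ^ (p - 2) * gam p s *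
      (p * (s + gam p s) ^ (p - 1) - p * s ^ (p - 1) - 1)) s := by
    intro s hs
    have hg := hasDerivAt_gam hp hs
    have h1 : HasDerivAt (fun t => (t + gam p t) ^ p) _ s :=
      ((hasDerivAt_id' s).add hg).rpow_const (Or.inr hp.le)
    have h2 := Real.hasDerivAt_rpow_const (x := s) (p := p) (Or.inl hs.ne')
    have h3 := (Real.hasDerivAt_rpow_const (x := s) (p := p - 1) (Or.inl hs.ne')).const_mul p
    refine ((h1.sub h2).sub (h3.mul hg)).congr_deriv ?_
    rw [show p - 1 - 1 = p - 2 by ring]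
    simp only [Pi.add_apply]
    ring
  have hmono : MonotoneOn F (Ici 0) := by
    have hr := Real.continuous_rpow_const (q := p) (by linarith)
    have hr1 := Real.continuous_rpow_const (q := p - 1) (by linarith)
    refine monotoneOn_of_deriv_nonneg (convex_Ici 0) ?_ ?_ ?_
    · exact ((hr.comp_continuousOn (continuousOn_id.add (continuousOn_gam hp))).sub
        hr.continuousOn).sub ((continuous_const.mul hr1).continuousOn.mul (continuousOn_gam hp))
    · intro s hs
      rw [interior_Ici] at hs
      exact (hderiv s hs).differentiableAt.differentiableWithinAt
    · intro s hs
      rw [interior_Ici] at hs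
      have hs : 0 < s := hs
      rw [(hderiv s hs).deriv]
      have h1 : 0 < p - 1 := by linarith
      have h2 := gam_pos hp hp2 hs.le
      have h3 := Real.rpow_pos_of_pos hs (p - 2)
      have h4 := mul_le_mul_of_nonneg_left (rpow_add_gam hp hp2 hs.le) (by linarith : 0 ≤ p)
      rw [mul_add, mul_one_div_cancel (by linarith)] at h4
      exact mul_nonneg (by positivity) (by linarith)
  have h := hmono (le_refl (0 : ℝ)) ht ht
  have h0 : F 0 = gam p 0 ^ (p - 1) * gam p 0 := by
    have hg := gam_pos hp hp2 le_rfl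
    simp only [hF]
    rw [Real.zero_rpow (by linarith), Real.zero_rpow (by linarith), Real.rpow_sub_one hg.ne']
    field_simp
    ring_nf
  have h5 := mul_le_mul_of_nonneg_right (half_le_gam_zero_rpow hp hp2) (gam_pos hp hp2 le_rfl).le
  rw [h0] at h
  linarith

/-- For fixed `a = |x|`, the value `U(x, y)` in the outer region, written in terms of
`t = H(|x| + |y|)` (so that `|y| = t + γ(t) − a`), is nondecreasing in `t`: this says that `U` is
nondecreasing in `|y|`. -/
lemma outer_mono {p a t₀ t : ℝ} (hp : 1 < p) (hp2 : p < 2) (h0 : 0 ≤ t₀) (h : t₀ ≤ t)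
    (ha : a ≤ t₀ + gam p t₀) :
    t₀ + gam p t₀ - a - t₀ ^ p - p * t₀ ^ (p - 1) * (a - t₀) ≤
      t + gam p t - a - t ^ p - p * t ^ (p - 1) * (a - t) := by
  set G : ℝ → ℝ := fun t => t + gam p t - a - t ^ p - p * t ^ (p - 1) * (a - t) with hG
  have hderiv : ∀ s, 0 < s →
      HasDerivAt G (p * (p - 1) * s ^ (p - 2) * (s + gam p s - a)) s := by
    intro s hs
    have h1 := ((hasDerivAt_id' s).add (hasDerivAt_gam hp hs)).sub_const a
    have h2 := Real.hasDerivAt_rpow_const (x := s) (p := p) (Or.inl hs.ne')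
    have h3 := (Real.hasDerivAt_rpow_const (x := s) (p := p - 1) (Or.inl hs.ne')).const_mul p
    refine ((h1.sub h2).sub (h3.mul ((hasDerivAt_id' s).const_sub a))).congr_deriv ?_
    rw [show p - 1 - 1 = p - 2 by ring]
    ring
  have hmono : MonotoneOn G (Ici t₀) := by
    have hr := Real.continuous_rpow_const (q := p) (by linarith)
    have hr1 := Real.continuous_rpow_const (q := p - 1) (by linarith)
    have hg := (continuousOn_gam hp).mono (Ici_subset_Ici.2 h0)
    refine monotoneOn_of_deriv_nonneg (convex_Ici t₀) ?_ ?_ ?_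
    · exact (((continuousOn_id.add hg).sub continuousOn_const).sub hr.continuousOn).sub
        ((continuous_const.mul hr1).mul (continuous_const.sub continuous_id)).continuousOn
    · intro s hs
      rw [interior_Ici] at hs
      exact (hderiv s (h0.trans_lt hs)).differentiableAt.differentiableWithinAt
    · intro s hs
      rw [interior_Ici] at hs
      have hs' : 0 < s := h0.trans_lt hs
      rw [(hderiv s hs').deriv]
      have h1 : 0 < p - 1 := by linarith
      have h3 := Real.rpow_pos_of_pos hs' (p - 2)
      have h4 : t₀ + gam p t₀ ≤ s + gam p s :=
        (strictMonoOn_add_gam hp hp2).monotoneOn h0 hs'.le (le_of_lt hs)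
      exact mul_nonneg (by positivity) (by linarith)
  exact hmono (le_refl t₀) h h

/-! ### The majorization -/

/-- The majorization `U(x,y) ≥ max{|y|, γ(0)/2} − |x|^p` for `1 < p < 2`. -/
theorem stmt_13 (p : ℝ) (hp1 : 1 < p) (hp2 : p < 2) (n : ℕ) (hn : 1 ≤ n)
    (H : ℝ → ℝ)
    (hH₁ : ∀ t : ℝ, 0 ≤ t → H (t + gam p t) = t)
    (hH₂ : ∀ l : ℝ, gam p 0 ≤ l → 0 ≤ H l ∧ H l + gam p (H l) = l)
    (x y : EuclideanSpace ℝ (Fin n)) :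
    max ‖y‖ (gam p 0 / 2) - ‖x‖ ^ p ≤ Uweak p H x y := by
  have ha : 0 ≤ ‖x‖ := norm_nonneg x
  have hb : 0 ≤ ‖y‖ := norm_nonneg y
  unfold Uweak
  generalize ‖x‖ = a at *
  generalize ‖y‖ = b at *
  have hg : 0 < gam p 0 := gam_pos hp1 hp2 le_rfl
  rw [sub_le_iff_le_add]
  split_ifs with hab
  · have h1 := sq_div_le hp1 hp2 ha (by linarith)
    have h2 : 0 ≤ b ^ 2 / (2 * gam p 0) := by positivity
    rw [sub_div]
    refine max_le ?_ (by linarith)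
    -- The difference of the two sides is at least `(γ(0) − b)² / (2γ(0))`.
    have h3 : 0 ≤ (gam p 0 - b) ^ 2 / (2 * gam p 0) := by positivity
    have h4 : (gam p 0 - b) ^ 2 / (2 * gam p 0)
        = gam p 0 / 2 - b + b ^ 2 / (2 * gam p 0) := by field_simp; ring
    linarith
  · push Not at hab
    obtain ⟨ht, hte⟩ := hH₂ (a + b) hab.le
    generalize H (a + b) = t at *
    refine max_le ?_ ?_
    · linarith [tangent_le_rpow hp1 ht ha]
    rcases le_total a (gam p 0) with hag | hag
    · -- Decrease `|y|` until the segment meets the boundary `|x| + |y| = γ(0)`, i.e. `t₀ = 0`.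
      have h := outer_mono (a := a) hp1 hp2 le_rfl ht (by linarith)
      rw [Real.zero_rpow (by linarith), Real.zero_rpow (by linarith)] at h
      have h1 := sq_div_le hp1 hp2 ha hag
      have h3 : 0 ≤ (gam p 0 - a) ^ 2 / (2 * gam p 0) := by positivity
      have h4 : (gam p 0 - a) ^ 2 / (2 * gam p 0)
          = gam p 0 / 2 - a + a ^ 2 / (2 * gam p 0) := by field_simp; ring
      linarith
    · -- Decrease `|y|` to `0`, i.e. `t₀ = H(|x|)`.
      obtain ⟨h0, h0e⟩ := hH₂ a hag
      generalize H a = t₀ at *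
      have hle : t₀ ≤ t := by
        refine ((strictMonoOn_add_gam hp1 hp2).le_iff_le h0 ht).1 ?_
        linarith
      have h := outer_mono (a := a) hp1 hp2 h0 hle h0e.ge
      have h1 := axis_bound hp1 hp2 h0
      rw [h0e] at h1
      have h2 : gam p t₀ = a - t₀ := by linarith
      rw [h2] at h1
      have h3 : b = t + gam p t - a := by linarith
      rw [h3]
      linarith
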